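/- Let v_n, v ∈ B(R,λ,α) for n = 1,2,…. If v_n(x,t) converges to v(x,t) pointwise on ℝ×[0,T] as n → ∞, then Γ_{[v_n]}(x,t,ξ,τ) converges to Γ_{[v]}(x,t,ξ,τ) for every (x,t), (ξ,τ) ∈ ℝ×[0,T] with t > τ. -/

import Mathlib

/-!
The proof is dominated convergence through the parametrix construction, with bounds that depend only
on `R`, `λ`, `α`.

Uniform kernel bound (`exists_kernel_bound`): the Hölder continuity of `a` gives
`|(LZ)₁(x,t,ξ,τ)| ≤ K (t-τ)^{α/2-1} e^{t-τ} g(x-ξ,t-τ)`, where `g` is the heat kernel with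
diffusivity `2R`, and `Z` satisfies the same bound.

Convolution (`abs_conv_le`): the space integrals of `g` combine by the semigroup identity
`gk_conv`. In time, weights `s^{β-1} e^{μs}` reproduce themselves under convolution with a constant
that tends to `0` as `μ → ∞`. Taking `μ` large gives
`|(LZ)ₘ₊₁| ≤ K 2^{-m} (t-τ)^{β-1} e^{μ(t-τ)} g(x-ξ,t-τ)` (`KernelOK.abs_LZm_le`), a geometric bound
that makes the series `φ` converge uniformly in the coefficients, with no asymptotics of Beta or
Gamma functions.

Limit (`GammaP_tendsto_of_kernel`): `Z` and `(LZ)₁` converge pointwise because they are explicit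
continuous expressions in the coefficients. The bounds above are the dominating functions for
`(LZ)ₘ` by induction on `m`, for the sum over `m`, and for the integral defining `Γ`.

The coefficients are controlled only for times in `[0,T]`. They are replaced by extensions constant
in time outside this interval (`clampT`), which are continuous on `ℝ × ℝ` and do not change `Γ`
(`GammaP_clampT`); this supplies the joint measurability required by the integrals.
-/

open MeasureTheory Filter

noncomputable section

/-- The parametrix: fundamental solution of the frozen-coefficient heat equation,
`Z(x,t,ξ,τ) = (4π a(ξ,τ)(t-τ))^{-1/2} exp(-(x-ξ)²/(4 a(ξ,τ)(t-τ)))`. -/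
def Zf (a : ℝ → ℝ → ℝ) (x t ξ τ : ℝ) : ℝ :=
  (Real.sqrt (4 * Real.pi * a ξ τ * (t - τ)))⁻¹ *
    Real.exp (-(x - ξ) ^ 2 / (4 * a ξ τ * (t - τ)))

/-- `(LZ)₁ = (a(ξ,τ) - a(x,t)) ∂ₓₓZ + b ∂ₓZ + c Z`. -/
def LZ1 (a b c : ℝ → ℝ → ℝ) (x t ξ τ : ℝ) : ℝ :=
  (a ξ τ - a x t) * iteratedDeriv 2 (fun y => Zf a y t ξ τ) x +
    b x t * deriv (fun y => Zf a y t ξ τ) x + c x t * Zf a x t ξ τ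

/-- `LZm a b c m = (LZ)_{m+1}`, defined recursively by
`(LZ)_{m+1}(x,t,ξ,τ) = ∫_τ^t ∫_ℝ (LZ)₁(x,t,y,σ)(LZ)_m(y,σ,ξ,τ) dy dσ`. -/
def LZm (a b c : ℝ → ℝ → ℝ) : ℕ → ℝ → ℝ → ℝ → ℝ → ℝ
  | 0 => LZ1 a b c
  | m + 1 => fun x t ξ τ => ∫ σ in τ..t, ∫ y : ℝ, LZ1 a b c x t y σ * LZm a b c m y σ ξ τ

/-- `φ(x,t,ξ,τ) = Σ_{m=1}^∞ (-1)^m (LZ)_m(x,t,ξ,τ)`. -/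
def phiP (a b c : ℝ → ℝ → ℝ) (x t ξ τ : ℝ) : ℝ :=
  ∑' m : ℕ, (-1 : ℝ) ^ (m + 1) * LZm a b c m x t ξ τ

/-- The parametrix-constructed fundamental solution
`Γ = Z + ∫_τ^t ∫_ℝ Z(x,t,y,σ) φ(y,σ,ξ,τ) dy dσ`. -/
def GammaP (a b c : ℝ → ℝ → ℝ) (x t ξ τ : ℝ) : ℝ :=
  Zf a x t ξ τ + ∫ σ in τ..t, ∫ y : ℝ, Zf a x t y σ * phiP a b c y σ ξ τ

/-- The sup norm of `u` on `ℝ × [0,T]`. -/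
def supN (T : ℝ) (u : ℝ → ℝ → ℝ) : ℝ :=
  sSup {r : ℝ | ∃ x t, 0 ≤ t ∧ t ≤ T ∧ r = |u x t|}

/-- The Hölder seminorm of exponents `(α, α/2)` of `u` on `ℝ × [0,T]`. -/
def holS (T α : ℝ) (u : ℝ → ℝ → ℝ) : ℝ :=
  sSup {r : ℝ | ∃ x t x' t', 0 ≤ t ∧ t ≤ T ∧ 0 ≤ t' ∧ t' ≤ T ∧ ¬(x = x' ∧ t = t') ∧
    r = |u x t - u x' t'| / (|x - x'| ^ α + |t - t'| ^ (α / 2))}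

/-- The norm `‖u‖_{α,α/2}` on `ℝ × [0,T]`. -/
def holN (T α : ℝ) (u : ℝ → ℝ → ℝ) : ℝ := supN T u + holS T α u

/-- `u` lies in `C^{α,α/2}(ℝ×[0,T])` with sup bound `C1` and Hölder constant `C2`. -/
def inC (T α C1 C2 : ℝ) (u : ℝ → ℝ → ℝ) : Prop :=
  (∀ x t, 0 ≤ t → t ≤ T → |u x t| ≤ C1) ∧
  ∀ x t x' t', 0 ≤ t → t ≤ T → 0 ≤ t' → t' ≤ T →
    |u x t - u x' t'| ≤ C2 * (|x - x'| ^ α + |t - t'| ^ (α / 2))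

/-- `v = (a,b,c) ∈ B(R,λ,α)`: `a ≥ λ` and the `C^{α,α/2}` norms of `a`, `b`, `c`
are `< R`. -/
def memB (T R lam α : ℝ) (a b c : ℝ → ℝ → ℝ) : Prop :=
  (∀ x t, 0 ≤ t → t ≤ T → lam ≤ a x t) ∧
  (∃ C1 C2 : ℝ, 0 ≤ C1 ∧ 0 ≤ C2 ∧ C1 + C2 < R ∧ inC T α C1 C2 a) ∧
  (∃ C1 C2 : ℝ, 0 ≤ C1 ∧ 0 ≤ C2 ∧ C1 + C2 < R ∧ inC T α C1 C2 b) ∧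
  (∃ C1 C2 : ℝ, 0 ≤ C1 ∧ 0 ≤ C2 ∧ C1 + C2 < R ∧ inC T α C1 C2 c)

/-- The distance `‖v - v̄‖_{α,α/2}` between two coefficient triples. -/
def vDist (T α : ℝ) (a b c abar bbar cbar : ℝ → ℝ → ℝ) : ℝ :=
  max (holN T α (fun x t => a x t - abar x t))
    (max (holN T α (fun x t => b x t - bbar x t))
      (holN T α (fun x t => c x t - cbar x t)))

end

/-! ### The dominating Gaussian kernel -/

/-- The heat kernel `(4πκs)^{-1/2} exp(-x²/(4κs))`. For `s ≤ 0` the square root is `0`, so the value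
is `0`, as `gk_eq_zero` records. -/
noncomputable def gk (κ x s : ℝ) : ℝ :=
  (Real.sqrt (4 * Real.pi * κ * s))⁻¹ * Real.exp (-x ^ 2 / (4 * κ * s))

lemma gk_nonneg (κ x s : ℝ) : 0 ≤ gk κ x s := by unfold gk; positivity

lemma gk_eq_zero {κ : ℝ} (hκ : 0 < κ) (x : ℝ) {s : ℝ} (hs : s ≤ 0) : gk κ x s = 0 := by
  have : 4 * Real.pi * κ * s ≤ 0 := mul_nonpos_of_nonneg_of_nonpos (by positivity) hs
  simp [gk, Real.sqrt_eq_zero_of_nonpos this]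

/-- The semigroup (Chapman–Kolmogorov) identity for the heat kernel. -/
lemma gk_conv {κ u w : ℝ} (hκ : 0 < κ) (hu : 0 < u) (hw : 0 < w) (x ξ : ℝ) :
    Integrable (fun y => gk κ (x - y) u * gk κ (y - ξ) w) ∧
      ∫ y, gk κ (x - y) u * gk κ (y - ξ) w = gk κ (x - ξ) (u + w) := by
  set A : ℝ := (u + w) / (4 * κ * u * w) with hA
  have hA0 : 0 < A := by positivity
  set m : ℝ := (w * x + u * ξ) / (u + w) with hm
  set P : ℝ := (Real.sqrt (4 * Real.pi * κ * u))⁻¹ * (Real.sqrt (4 * Real.pi * κ * w))⁻¹ *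
    Real.exp (-(x - ξ) ^ 2 / (4 * κ * (u + w))) with hP
  have huw : u + w ≠ 0 := by positivity
  -- completing the square in `y`
  have key : (fun y => gk κ (x - y) u * gk κ (y - ξ) w) =
      fun y => P * Real.exp (-A * (y - m) ^ 2) := by
    funext y
    have : Real.exp (-(x - y) ^ 2 / (4 * κ * u)) * Real.exp (-(y - ξ) ^ 2 / (4 * κ * w)) =
        Real.exp (-(x - ξ) ^ 2 / (4 * κ * (u + w))) * Real.exp (-A * (y - m) ^ 2) := by
      rw [← Real.exp_add, ← Real.exp_add]
      congr 1
      rw [hA, hm]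
      field_simp
      ring
    simp only [gk, hP]
    linear_combination ((Real.sqrt (4 * Real.pi * κ * u))⁻¹ *
      (Real.sqrt (4 * Real.pi * κ * w))⁻¹) * this
  rw [key]
  constructor
  · exact ((integrable_exp_neg_mul_sq hA0).comp_sub_right m).const_mul P
  · rw [integral_const_mul, integral_sub_right_eq_self (fun y => Real.exp (-A * y ^ 2)) m,
      integral_gaussian, hP, gk]
    have h1 : Real.sqrt (Real.pi / A) = Real.sqrt (4 * Real.pi * κ * u) *
        Real.sqrt (4 * Real.pi * κ * w) * (Real.sqrt (4 * Real.pi * κ * (u + w)))⁻¹ := by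
      rw [← Real.sqrt_mul (by positivity), ← Real.sqrt_inv, ← Real.sqrt_mul (by positivity)]
      congr 1
      rw [hA]
      have := Real.pi_pos.ne'
      field_simp
      try ring
    rw [h1]
    have h2 : Real.sqrt (4 * Real.pi * κ * u) ≠ 0 := by positivity
    have h3 : Real.sqrt (4 * Real.pi * κ * w) ≠ 0 := by positivity
    field_simp

/-! ### The singular time weight -/

/-- The integrable function `r ↦ r^{β-1} e^{-νr}` on `r > 0`, extended by `0`. -/
noncomputable def hk (β ν r : ℝ) : ℝ :=
  (Set.Ioi (0 : ℝ)).indicator (fun r => r ^ (β - 1) * Real.exp (-ν * r)) r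

lemma hk_nonneg (β ν r : ℝ) : 0 ≤ hk β ν r := by
  unfold hk
  exact Set.indicator_nonneg (fun r hr => mul_nonneg (Real.rpow_nonneg (le_of_lt hr) _)
    (Real.exp_pos _).le) _

lemma hk_integrable {β ν : ℝ} (hβ : 0 < β) (hν : 0 < ν) : Integrable (hk β ν) := by
  have := integrableOn_rpow_mul_exp_neg_mul_rpow (p := 1) (s := β - 1) (b := ν)
    (by linarith) one_pos hν
  simp only [Real.rpow_one] at this
  exact (integrable_indicator_iff measurableSet_Ioi).2 this

lemma hk_integral {β ν : ℝ} (hβ : 0 < β) (hν : 0 < ν) :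
    ∫ r, hk β ν r = (1 / ν) ^ β * Real.Gamma β := by
  have := Real.integral_rpow_mul_exp_neg_mul_Ioi hβ hν
  simp only [← neg_mul] at this
  rw [← this]
  exact integral_indicator measurableSet_Ioi

/-- The time weight `s^{β-1} e^{μs}`, used for `s > 0`. -/
noncomputable def wk (β μ s : ℝ) : ℝ := s ^ (β - 1) * Real.exp (μ * s)

lemma wk_nonneg (β μ : ℝ) {s : ℝ} (hs : 0 ≤ s) : 0 ≤ wk β μ s :=
  mul_nonneg (Real.rpow_nonneg hs _) (Real.exp_pos _).le

/-- Pointwise bound on the integrand of the time convolution. The larger of `u`, `w` is at least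
`(u+w)/2`, so its power contributes the singularity of the result at `u + w`; the remaining factor
is integrable with a small integral when `ν` is large. -/
lemma wk_mul_le {β ν u w : ℝ} (hβ1 : β ≤ 1) (hν : 0 < ν) (hu : 0 < u) (hw : 0 < w) :
    wk β 1 u * wk β (ν + 1) w ≤
      wk β (ν + 1) (u + w) * (2 ^ (1 - β) * (hk β ν u + hk β ν w)) := by
  have hb : β - 1 ≤ 0 := by linarith
  have hE : wk β 1 u * wk β (ν + 1) w =
      Real.exp ((ν + 1) * (u + w)) * (u ^ (β - 1) * w ^ (β - 1) * Real.exp (-ν * u)) := by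
    have : Real.exp (1 * u) * Real.exp ((ν + 1) * w) =
        Real.exp ((ν + 1) * (u + w)) * Real.exp (-ν * u) := by
      rw [← Real.exp_add, ← Real.exp_add]; congr 1; ring
    unfold wk
    linear_combination (u ^ (β - 1) * w ^ (β - 1)) * this
  have h2 : ((u + w) / 2) ^ (β - 1) = (u + w) ^ (β - 1) * 2 ^ (1 - β) := by
    rw [Real.div_rpow (by positivity) (by positivity), div_eq_mul_inv,
      ← Real.rpow_neg (by positivity)]
    congr 2; ring
  have hhu : hk β ν u = u ^ (β - 1) * Real.exp (-ν * u) := Set.indicator_of_mem (by exact hu) _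
  have hhw : hk β ν w = w ^ (β - 1) * Real.exp (-ν * w) := Set.indicator_of_mem (by exact hw) _
  have hR : wk β (ν + 1) (u + w) * (2 ^ (1 - β) * (hk β ν u + hk β ν w)) =
      Real.exp ((ν + 1) * (u + w)) * (((u + w) / 2) ^ (β - 1) * (hk β ν u + hk β ν w)) := by
    rw [h2]; unfold wk; ring
  rw [hE, hR]
  refine mul_le_mul_of_nonneg_left ?_ (Real.exp_pos _).le
  have hup : 0 ≤ u ^ (β - 1) := Real.rpow_nonneg hu.le _
  have hwp : 0 ≤ w ^ (β - 1) := Real.rpow_nonneg hw.le _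
  have hcp : 0 ≤ ((u + w) / 2) ^ (β - 1) := by positivity
  rcases le_total u w with h | h
  · have h3 : w ^ (β - 1) ≤ ((u + w) / 2) ^ (β - 1) :=
      Real.rpow_le_rpow_of_nonpos (by positivity) (by linarith) hb
    calc u ^ (β - 1) * w ^ (β - 1) * Real.exp (-ν * u) = w ^ (β - 1) * hk β ν u := by
          rw [hhu]; ring
      _ ≤ ((u + w) / 2) ^ (β - 1) * (hk β ν u + hk β ν w) :=
          mul_le_mul h3 (by linarith [hk_nonneg β ν w]) (hk_nonneg _ _ _) hcp
  · have h3 : u ^ (β - 1) ≤ ((u + w) / 2) ^ (β - 1) :=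
      Real.rpow_le_rpow_of_nonpos (by positivity) (by linarith) hb
    have h4 : Real.exp (-ν * u) ≤ Real.exp (-ν * w) := Real.exp_le_exp.2 (by nlinarith)
    calc u ^ (β - 1) * w ^ (β - 1) * Real.exp (-ν * u)
        ≤ u ^ (β - 1) * w ^ (β - 1) * Real.exp (-ν * w) := by gcongr
      _ = u ^ (β - 1) * hk β ν w := by rw [hhw]; ring
      _ ≤ ((u + w) / 2) ^ (β - 1) * (hk β ν u + hk β ν w) :=
          mul_le_mul h3 (by linarith [hk_nonneg β ν u]) (hk_nonneg _ _ _) hcp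

/-- A rate `ν` for which the convolution constant of `abs_conv_le` is at most `1/2`. -/
lemma exists_rate {β : ℝ} (hβ : 0 < β) (K : ℝ) :
    ∃ ν : ℝ, 0 < ν ∧ K * (2 ^ (1 - β) * (2 * ((1 / ν) ^ β * Real.Gamma β))) ≤ 1 / 2 := by
  have h1 : Tendsto (fun ν : ℝ => (1 / ν) ^ β) atTop (nhds 0) := by
    have := tendsto_rpow_neg_atTop hβ
    refine this.congr' ?_
    filter_upwards [eventually_gt_atTop 0] with ν hν
    rw [one_div, Real.inv_rpow hν.le, Real.rpow_neg hν.le]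
  have h2 : Tendsto (fun ν : ℝ => K * (2 ^ (1 - β) * (2 * ((1 / ν) ^ β * Real.Gamma β)))) atTop
      (nhds (K * (2 ^ (1 - β) * (2 * (0 * Real.Gamma β))))) :=
    (((h1.mul_const _).const_mul _).const_mul _).const_mul _
  have h3 := h2.eventually_lt_const (u := 1 / 2) (by norm_num)
  obtain ⟨ν, hν, hν0⟩ := (h3.and (eventually_gt_atTop 0)).exists
  exact ⟨ν, hν0, hν.le⟩

/-! ### Space-time convolution of dominated kernels -/

/-- The product of the bounds on two dominated kernels at the intermediate point `(y,σ)`. -/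
noncomputable def prodBd (β ν κ C x t ξ τ σ y : ℝ) : ℝ :=
  C * (wk β 1 (t - σ) * wk β (ν + 1) (σ - τ)) * (gk κ (x - y) (t - σ) * gk κ (y - ξ) (σ - τ))

/-- An integrable function of `σ` dominating the space integral of `prodBd`. -/
noncomputable def timeBd (β ν κ C x t ξ τ σ : ℝ) : ℝ :=
  C * gk κ (x - ξ) (t - τ) *
    (wk β (ν + 1) (t - τ) * (2 ^ (1 - β) * (hk β ν (t - σ) + hk β ν (σ - τ))))

lemma prodBd_integrable {κ : ℝ} (hκ : 0 < κ) (β ν C x t ξ τ σ : ℝ) :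
    Integrable (prodBd β ν κ C x t ξ τ σ) := by
  unfold prodBd
  rcases le_or_gt t σ with h1 | h1
  · simp [gk_eq_zero hκ _ (sub_nonpos.2 h1)]
  rcases le_or_gt σ τ with h2 | h2
  · simp [gk_eq_zero hκ _ (sub_nonpos.2 h2)]
  exact (gk_conv hκ (sub_pos.2 h1) (sub_pos.2 h2) x ξ).1.const_mul _

lemma timeBd_nonneg {β ν κ C t τ : ℝ} (hC : 0 ≤ C) (hτ : τ < t) (x ξ σ : ℝ) :
    0 ≤ timeBd β ν κ C x t ξ τ σ := by
  unfold timeBd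
  have := wk_nonneg β (ν + 1) (sub_pos.2 hτ).le
  have := gk_nonneg κ (x - ξ) (t - τ)
  have := hk_nonneg β ν (t - σ)
  have := hk_nonneg β ν (σ - τ)
  positivity

lemma prodBd_integral_le {β ν κ C t τ : ℝ} (hκ : 0 < κ) (hβ1 : β ≤ 1) (hν : 0 < ν)
    (hC : 0 ≤ C) (hτ : τ < t) (x ξ σ : ℝ) :
    ∫ y, prodBd β ν κ C x t ξ τ σ y ≤ timeBd β ν κ C x t ξ τ σ := by
  rcases le_or_gt t σ with h1 | h1
  · simpa [prodBd, gk_eq_zero hκ _ (sub_nonpos.2 h1)] using timeBd_nonneg hC hτ x ξ σ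
  rcases le_or_gt σ τ with h2 | h2
  · simpa [prodBd, gk_eq_zero hκ _ (sub_nonpos.2 h2)] using timeBd_nonneg hC hτ x ξ σ
  have h := wk_mul_le hβ1 hν (sub_pos.2 h1) (sub_pos.2 h2)
  unfold prodBd timeBd
  rw [integral_const_mul, (gk_conv hκ (sub_pos.2 h1) (sub_pos.2 h2) x ξ).2,
    sub_add_sub_cancel]
  rw [sub_add_sub_cancel] at h
  have hg := gk_nonneg κ (x - ξ) (t - τ)
  calc C * (wk β 1 (t - σ) * wk β (ν + 1) (σ - τ)) * gk κ (x - ξ) (t - τ)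
      = C * gk κ (x - ξ) (t - τ) * (wk β 1 (t - σ) * wk β (ν + 1) (σ - τ)) := by ring
    _ ≤ _ := mul_le_mul_of_nonneg_left h (by positivity)

lemma timeBd_integrable {β ν : ℝ} (hβ : 0 < β) (hν : 0 < ν) (κ C x t ξ τ : ℝ) :
    Integrable (timeBd β ν κ C x t ξ τ) := by
  unfold timeBd
  exact (((((hk_integrable hβ hν).comp_sub_left t).add
    ((hk_integrable hβ hν).comp_sub_right τ)).const_mul _).const_mul _).const_mul _

lemma timeBd_integral {β ν : ℝ} (hβ : 0 < β) (hν : 0 < ν) (κ C x t ξ τ : ℝ) :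
    ∫ σ, timeBd β ν κ C x t ξ τ σ = C * gk κ (x - ξ) (t - τ) *
      (wk β (ν + 1) (t - τ) * (2 ^ (1 - β) * (2 * ((1 / ν) ^ β * Real.Gamma β)))) := by
  unfold timeBd
  rw [integral_const_mul, integral_const_mul, integral_const_mul,
    integral_add ((hk_integrable hβ hν).comp_sub_left t)
      ((hk_integrable hβ hν).comp_sub_right τ),
    integral_sub_left_eq_self (hk β ν) volume t, integral_sub_right_eq_self (hk β ν) τ,
    hk_integral hβ hν, two_mul]

lemma abs_mul_le_prodBd {β ν κ K M x t ξ τ : ℝ} {A F : ℝ → ℝ → ℝ}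
    (hA : ∀ y σ, |A y σ| ≤ K * (wk β 1 (t - σ) * gk κ (x - y) (t - σ)))
    (hF : ∀ y σ, |F y σ| ≤ M * (wk β (ν + 1) (σ - τ) * gk κ (y - ξ) (σ - τ))) (σ y : ℝ) :
    |A y σ * F y σ| ≤ prodBd β ν κ (K * M) x t ξ τ σ y := by
  rw [abs_mul]
  refine (mul_le_mul (hA y σ) (hF y σ) (abs_nonneg _) ((abs_nonneg _).trans (hA y σ))).trans_eq ?_
  unfold prodBd; ring

lemma abs_inner_le {β ν κ K M x t ξ τ : ℝ} {A F : ℝ → ℝ → ℝ} (hκ : 0 < κ) (hβ1 : β ≤ 1)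
    (hν : 0 < ν) (hK : 0 ≤ K) (hM : 0 ≤ M) (hτ : τ < t)
    (hA : ∀ y σ, |A y σ| ≤ K * (wk β 1 (t - σ) * gk κ (x - y) (t - σ)))
    (hF : ∀ y σ, |F y σ| ≤ M * (wk β (ν + 1) (σ - τ) * gk κ (y - ξ) (σ - τ))) (σ : ℝ) :
    |∫ y, A y σ * F y σ| ≤ timeBd β ν κ (K * M) x t ξ τ σ :=
  (norm_integral_le_of_norm_le (f := fun y => A y σ * F y σ)
    (prodBd_integrable hκ β ν (K * M) x t ξ τ σ)
    (Eventually.of_forall (abs_mul_le_prodBd hA hF σ))).trans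
    (prodBd_integral_le hκ hβ1 hν (mul_nonneg hK hM) hτ x ξ σ)

/-- The time weight `wk β (ν + 1)` times the heat kernel reproduces itself under convolution with a
dominated kernel, with a constant that is small when `ν` is large. -/
lemma abs_conv_le {β ν κ K M x t ξ τ : ℝ} {A F : ℝ → ℝ → ℝ} (hκ : 0 < κ) (hβ : 0 < β)
    (hβ1 : β ≤ 1) (hν : 0 < ν) (hK : 0 ≤ K) (hM : 0 ≤ M) (hτ : τ < t)
    (hA : ∀ y σ, |A y σ| ≤ K * (wk β 1 (t - σ) * gk κ (x - y) (t - σ)))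
    (hF : ∀ y σ, |F y σ| ≤ M * (wk β (ν + 1) (σ - τ) * gk κ (y - ξ) (σ - τ))) :
    |∫ σ in τ..t, ∫ y, A y σ * F y σ| ≤
      (K * (2 ^ (1 - β) * (2 * ((1 / ν) ^ β * Real.Gamma β)))) * M *
        (wk β (ν + 1) (t - τ) * gk κ (x - ξ) (t - τ)) := by
  have hint := timeBd_integrable hβ hν κ (K * M) x t ξ τ
  have h1 := intervalIntegral.norm_integral_le_of_norm_le (μ := volume)
    (f := fun σ => ∫ y, A y σ * F y σ) hτ.le
    (Eventually.of_forall fun σ _ => abs_inner_le hκ hβ1 hν hK hM hτ hA hF σ)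
    hint.intervalIntegrable
  have h2 := setIntegral_le_integral (s := Set.Ioc τ t) hint
    (Eventually.of_forall (timeBd_nonneg (mul_nonneg hK hM) hτ x ξ))
  rw [timeBd_integral hβ hν, ← intervalIntegral.integral_of_le hτ.le] at h2
  refine (h1.trans h2).trans_eq ?_
  ring

/-- Dominated convergence for the space-time convolution, applied first in `y` and then in `σ`. -/
lemma conv_tendsto {β ν κ K M x t ξ τ : ℝ} {A F : ℕ → ℝ → ℝ → ℝ} {A₀ F₀ : ℝ → ℝ → ℝ}
    (hκ : 0 < κ) (hβ : 0 < β)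
    (hβ1 : β ≤ 1) (hν : 0 < ν) (hK : 0 ≤ K) (hM : 0 ≤ M) (hτ : τ < t)
    (hA : ∀ n y σ, |A n y σ| ≤ K * (wk β 1 (t - σ) * gk κ (x - y) (t - σ)))
    (hF : ∀ n y σ, |F n y σ| ≤ M * (wk β (ν + 1) (σ - τ) * gk κ (y - ξ) (σ - τ)))
    (hAm : ∀ n, Measurable fun z : ℝ × ℝ => A n z.1 z.2)
    (hFm : ∀ n, Measurable fun z : ℝ × ℝ => F n z.1 z.2)
    (hAl : ∀ y σ, Tendsto (fun n => A n y σ) atTop (nhds (A₀ y σ)))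
    (hFl : ∀ y σ, Tendsto (fun n => F n y σ) atTop (nhds (F₀ y σ))) :
    Tendsto (fun n => ∫ σ in τ..t, ∫ y, A n y σ * F n y σ) atTop
      (nhds (∫ σ in τ..t, ∫ y, A₀ y σ * F₀ y σ)) := by
  have hm : ∀ n, Measurable fun z : ℝ × ℝ => A n z.2 z.1 * F n z.2 z.1 := fun n =>
    ((hAm n).comp measurable_swap).mul ((hFm n).comp measurable_swap)
  refine intervalIntegral.tendsto_integral_filter_of_dominated_convergence
    (timeBd β ν κ (K * M) x t ξ τ) ?_ ?_ (timeBd_integrable hβ hν κ _ x t ξ τ).intervalIntegrable ?_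
  · refine Eventually.of_forall fun n => ?_
    exact (hm n).stronglyMeasurable.integral_prod_right'.aestronglyMeasurable
  · exact Eventually.of_forall fun n => Eventually.of_forall fun σ _ =>
      abs_inner_le hκ hβ1 hν hK hM hτ (hA n) (hF n) σ
  · refine Eventually.of_forall fun σ _ => ?_
    refine tendsto_integral_of_dominated_convergence (prodBd β ν κ (K * M) x t ξ τ σ) ?_
      (prodBd_integrable hκ β ν (K * M) x t ξ τ σ) ?_ ?_
    · exact fun n => ((hm n).comp measurable_prodMk_left).aestronglyMeasurable
    · exact fun n => Eventually.of_forall (abs_mul_le_prodBd (hA n) (hF n) σ)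
    · exact Eventually.of_forall fun y => (hAl y σ).mul (hFl y σ)

/-! ### Explicit form of `(LZ)₁` -/

/-- When `a(ξ,τ)(t-τ) ≤ 0` the function and the claimed derivative are both `0`, so no sign
condition is needed. -/
lemma Zf_hasDerivAt (a : ℝ → ℝ → ℝ) (x t ξ τ : ℝ) :
    HasDerivAt (fun y => Zf a y t ξ τ) (-(x - ξ) / (2 * a ξ τ * (t - τ)) * Zf a x t ξ τ) x := by
  unfold Zf
  have h := (((((hasDerivAt_id x).sub_const ξ).pow 2).neg.div_const
    (4 * a ξ τ * (t - τ))).exp).const_mul (Real.sqrt (4 * Real.pi * a ξ τ * (t - τ)))⁻¹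
  refine h.congr_deriv ?_
  have e : -(x - ξ) / (2 * a ξ τ * (t - τ)) = -(2 * (x - ξ)) / (4 * a ξ τ * (t - τ)) := by
    rw [show 4 * a ξ τ * (t - τ) = 2 * (2 * a ξ τ * (t - τ)) by ring, ← mul_neg,
      mul_div_mul_left _ _ two_ne_zero]
  rw [e]
  simp
  ring

lemma deriv_Zf (a : ℝ → ℝ → ℝ) (x t ξ τ : ℝ) :
    deriv (fun y => Zf a y t ξ τ) x = -(x - ξ) / (2 * a ξ τ * (t - τ)) * Zf a x t ξ τ :=
  (Zf_hasDerivAt a x t ξ τ).deriv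

lemma deriv2_Zf (a : ℝ → ℝ → ℝ) (x t ξ τ : ℝ) :
    iteratedDeriv 2 (fun y => Zf a y t ξ τ) x =
      (((x - ξ) / (2 * a ξ τ * (t - τ))) ^ 2 - 1 / (2 * a ξ τ * (t - τ))) * Zf a x t ξ τ := by
  rw [iteratedDeriv_succ, iteratedDeriv_one]
  have : deriv (fun y => Zf a y t ξ τ) =
      fun y => -(y - ξ) / (2 * a ξ τ * (t - τ)) * Zf a y t ξ τ := by
    funext y; exact deriv_Zf a y t ξ τ
  rw [this]
  have h := ((((hasDerivAt_id x).sub_const ξ).neg.div_const (2 * a ξ τ * (t - τ))).mul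
    (Zf_hasDerivAt a x t ξ τ))
  refine (HasDerivAt.deriv h).trans ?_
  generalize 2 * a ξ τ * (t - τ) = D
  simp
  ring

lemma LZ1_eq (a b c : ℝ → ℝ → ℝ) (x t ξ τ : ℝ) : LZ1 a b c x t ξ τ =
    ((a ξ τ - a x t) *
      (((x - ξ) / (2 * a ξ τ * (t - τ))) ^ 2 - 1 / (2 * a ξ τ * (t - τ))) +
      b x t * (-(x - ξ) / (2 * a ξ τ * (t - τ))) + c x t) * Zf a x t ξ τ := by
  rw [LZ1, deriv_Zf, deriv2_Zf]; ring

lemma measurable_Zf {a : ℝ → ℝ → ℝ} (ha : Measurable fun z : ℝ × ℝ => a z.1 z.2) :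
    Measurable fun z : (ℝ × ℝ) × (ℝ × ℝ) => Zf a z.1.1 z.1.2 z.2.1 z.2.2 := by
  have h2 : Measurable fun z : (ℝ × ℝ) × (ℝ × ℝ) => a z.2.1 z.2.2 := ha.comp measurable_snd
  unfold Zf
  fun_prop

lemma measurable_LZ1 {a b c : ℝ → ℝ → ℝ} (ha : Measurable fun z : ℝ × ℝ => a z.1 z.2)
    (hb : Measurable fun z : ℝ × ℝ => b z.1 z.2) (hc : Measurable fun z : ℝ × ℝ => c z.1 z.2) :
    Measurable fun z : (ℝ × ℝ) × (ℝ × ℝ) => LZ1 a b c z.1.1 z.1.2 z.2.1 z.2.2 := by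
  have h1 : Measurable fun z : (ℝ × ℝ) × (ℝ × ℝ) => a z.1.1 z.1.2 := ha.comp measurable_fst
  have h2 : Measurable fun z : (ℝ × ℝ) × (ℝ × ℝ) => a z.2.1 z.2.2 := ha.comp measurable_snd
  have h3 : Measurable fun z : (ℝ × ℝ) × (ℝ × ℝ) => b z.1.1 z.1.2 := hb.comp measurable_fst
  have h4 : Measurable fun z : (ℝ × ℝ) × (ℝ × ℝ) => c z.1.1 z.1.2 := hc.comp measurable_fst
  have h5 := measurable_Zf ha
  simp only [LZ1_eq]
  fun_prop

/-! ### The Gaussian bound on `Z` and `(LZ)₁` -/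

/-- The properties of `B(R,λ,α)` used for the kernel bounds, imposed on all of `ℝ × ℝ`, together
with measurability. -/
structure GoodCoef (R lam α : ℝ) (a b c : ℝ → ℝ → ℝ) : Prop where
  lower : ∀ x t, lam ≤ a x t
  upper : ∀ x t, a x t ≤ R
  bdd_b : ∀ x t, |b x t| ≤ R
  bdd_c : ∀ x t, |c x t| ≤ R
  hol : ∀ x t x' t', |a x t - a x' t'| ≤ R * (|x - x'| ^ α + |t - t'| ^ (α / 2))
  meas_a : Measurable fun z : ℝ × ℝ => a z.1 z.2
  meas_b : Measurable fun z : ℝ × ℝ => b z.1 z.2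
  meas_c : Measurable fun z : ℝ × ℝ => c z.1 z.2

lemma rpow_le_one_add {w θ : ℝ} (hw : 0 ≤ w) (hθ : 0 ≤ θ) (hθ1 : θ ≤ 1) : w ^ θ ≤ 1 + w := by
  calc w ^ θ ≤ (1 + w) ^ θ := Real.rpow_le_rpow hw (by linarith) hθ
    _ ≤ (1 + w) ^ (1 : ℝ) := Real.rpow_le_rpow_of_exponent_le (by linarith) hθ1
    _ = 1 + w := Real.rpow_one _

lemma rpow_le_wk {β γ s : ℝ} (hs : 0 < s) (h1 : β - 1 ≤ γ) (h2 : γ ≤ β) :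
    s ^ γ ≤ wk β 1 s := by
  have h : s ^ (γ - (β - 1)) ≤ Real.exp (1 * s) := by
    refine (rpow_le_one_add hs.le (by linarith) (by linarith)).trans ?_
    rw [one_mul, add_comm]
    exact Real.add_one_le_exp s
  calc s ^ γ = s ^ (β - 1) * s ^ (γ - (β - 1)) := by
        rw [← Real.rpow_add hs]; congr 1; ring
    _ ≤ _ := mul_le_mul_of_nonneg_left h (Real.rpow_nonneg hs.le _)

/-- The factor `|z|^{2θ}` is traded for `s^θ`, at the price of a polynomial in `z²/(8Rs)` that half
of the Gaussian absorbs. -/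
lemma abs_rpow_le {R s z θ : ℝ} (hR : 0 < R) (hs : 0 < s) (hθ : 0 ≤ θ) (hθ1 : θ ≤ 1) :
    |z| ^ (2 * θ) ≤ (8 * R) ^ θ * s ^ θ * (1 + z ^ 2 / (8 * R * s)) := by
  have h : |z| ^ (2 * θ) = (8 * R) ^ θ * s ^ θ * (z ^ 2 / (8 * R * s)) ^ θ := by
    rw [← Real.mul_rpow (by positivity) hs.le, ← Real.mul_rpow (by positivity) (by positivity),
      Real.rpow_mul (abs_nonneg z)]
    congr 1
    rw [Real.rpow_two, sq_abs]
    field_simp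
  rw [h]
  exact mul_le_mul_of_nonneg_left (rpow_le_one_add (by positivity) hθ hθ1) (by positivity)

/-- The Gaussian with variance parameter `a ≤ R` is split into the kernel `gk (2R)` and a factor
`exp(-z²/(8Rs))` kept to absorb polynomial growth. -/
lemma Zf_le {R lam a s z : ℝ} (hlam : 0 < lam) (hla : lam ≤ a) (haR : a ≤ R) (hs : 0 < s) :
    (Real.sqrt (4 * Real.pi * a * s))⁻¹ * Real.exp (-z ^ 2 / (4 * a * s)) ≤
      Real.sqrt (2 * R / lam) * Real.exp (-(z ^ 2 / (8 * R * s))) * gk (2 * R) z s := by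
  have ha : 0 < a := by linarith
  have hR : 0 < R := by linarith
  have h1 : (Real.sqrt (4 * Real.pi * a * s))⁻¹ ≤
      Real.sqrt (2 * R / lam) * (Real.sqrt (4 * Real.pi * (2 * R) * s))⁻¹ := by
    have : Real.sqrt (2 * R / lam) * (Real.sqrt (4 * Real.pi * (2 * R) * s))⁻¹ =
        (Real.sqrt (4 * Real.pi * lam * s))⁻¹ := by
      rw [← Real.sqrt_inv, ← Real.sqrt_inv, ← Real.sqrt_mul (by positivity)]
      congr 1
      have := Real.pi_pos.ne'
      field_simp
    rw [this]
    gcongr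
  have h2 : Real.exp (-z ^ 2 / (4 * a * s)) ≤
      Real.exp (-(z ^ 2 / (8 * R * s))) * Real.exp (-z ^ 2 / (4 * (2 * R) * s)) := by
    rw [← Real.exp_add]
    refine Real.exp_le_exp.2 ?_
    have e : -(z ^ 2 / (8 * R * s)) + -z ^ 2 / (4 * (2 * R) * s) = -(z ^ 2 / (4 * R * s)) := by
      field_simp; ring
    rw [e, neg_div, neg_le_neg_iff]
    gcongr
  refine (mul_le_mul h1 h2 (Real.exp_pos _).le (by positivity)).trans_eq ?_
  unfold gk; ring

/-- The factor multiplying `Z` in `(LZ)₁`, with `z = x - ξ`, `s = t - τ`,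
`d = a(ξ,τ) - a(x,t)`: the Hölder bound on `d` lowers the singularity `s⁻¹` of `∂ₓₓZ / Z` to
`s^{α/2-1}`. -/
lemma bracket_le {R lam α a d B C s z : ℝ} (hα : 0 < α) (hα1 : α ≤ 1) (hlam : 0 < lam)
    (hla : lam ≤ a) (haR : a ≤ R) (hs : 0 < s) (hd : |d| ≤ R * (|z| ^ α + s ^ (α / 2)))
    (hB : |B| ≤ R) (hC : |C| ≤ R) :
    |d * ((z / (2 * a * s)) ^ 2 - 1 / (2 * a * s)) + B * (-z / (2 * a * s)) + C| ≤
      (2 * (R * ((8 * R) ^ (α / 2) + 1) * (2 * R / lam ^ 2 + 1 / (2 * lam))) +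
        R * ((8 * R) ^ (1 / 2 : ℝ) / (2 * lam)) + R) *
        (wk (α / 2) 1 s * Real.exp (z ^ 2 / (8 * R * s))) := by
  have ha : 0 < a := by linarith
  have hR : 0 < R := by linarith
  set w : ℝ := z ^ 2 / (8 * R * s) with hw
  have hw0 : 0 ≤ w := by positivity
  have hz2 : z ^ 2 = 8 * R * s * w := by rw [hw]; field_simp
  have hew : 1 + w ≤ Real.exp w := by linarith [Real.add_one_le_exp w]
  have hew1 : 1 ≤ Real.exp w := by linarith
  have hew2 : (1 + w) ^ 2 ≤ 2 * Real.exp w := by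
    have := Real.quadratic_le_exp_of_nonneg hw0
    nlinarith
  have hW0 := wk_nonneg (α / 2) 1 hs.le
  -- the three terms are estimated separately
  have t1 : |d * ((z / (2 * a * s)) ^ 2 - 1 / (2 * a * s))| ≤
      2 * (R * ((8 * R) ^ (α / 2) + 1) * (2 * R / lam ^ 2 + 1 / (2 * lam))) *
        (wk (α / 2) 1 s * Real.exp w) := by
    have e1 : |d| ≤ R * (((8 * R) ^ (α / 2) + 1) * s ^ (α / 2) * (1 + w)) := by
      refine hd.trans (mul_le_mul_of_nonneg_left ?_ hR.le)
      have := abs_rpow_le (z := z) hR hs (θ := α / 2) (by linarith) (by linarith)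
      rw [mul_div_cancel₀ _ two_ne_zero, ← hw] at this
      have h3 : 0 ≤ s ^ (α / 2) * w := by positivity
      linarith
    have e2 : |(z / (2 * a * s)) ^ 2 - 1 / (2 * a * s)| ≤
        (2 * R / lam ^ 2 + 1 / (2 * lam)) * (s⁻¹ * (1 + w)) := by
      have p1 : (z / (2 * a * s)) ^ 2 ≤ 2 * R / lam ^ 2 * (s⁻¹ * (1 + w)) := by
        calc (z / (2 * a * s)) ^ 2 = z ^ 2 / (2 * a * s) ^ 2 := by rw [div_pow]
          _ ≤ z ^ 2 / (2 * lam * s) ^ 2 := by gcongr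
          _ = 2 * R / lam ^ 2 * (s⁻¹ * w) := by rw [hz2]; field_simp; ring
          _ ≤ _ := by gcongr; linarith
      have p2 : 1 / (2 * a * s) ≤ 1 / (2 * lam) * (s⁻¹ * (1 + w)) := by
        calc 1 / (2 * a * s) ≤ 1 / (2 * lam * s) := by gcongr
          _ = 1 / (2 * lam) * (s⁻¹ * 1) := by field_simp
          _ ≤ _ := by gcongr; linarith
      have p3 : 0 ≤ (z / (2 * a * s)) ^ 2 := by positivity
      have p4 : 0 ≤ 1 / (2 * a * s) := by positivity
      rw [abs_le]; constructor <;> nlinarith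
    rw [abs_mul]
    refine (mul_le_mul e1 e2 (abs_nonneg _) (by positivity)).trans ?_
    have e3 : s ^ (α / 2) * s⁻¹ = s ^ (α / 2 - 1) := by
      rw [Real.rpow_sub_one hs.ne']; exact (div_eq_mul_inv _ _).symm
    calc _ = R * ((8 * R) ^ (α / 2) + 1) * (2 * R / lam ^ 2 + 1 / (2 * lam)) *
          ((s ^ (α / 2) * s⁻¹) * (1 + w) ^ 2) := by ring
      _ ≤ R * ((8 * R) ^ (α / 2) + 1) * (2 * R / lam ^ 2 + 1 / (2 * lam)) *
          (wk (α / 2) 1 s * (2 * Real.exp w)) := by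
        rw [e3]
        have := rpow_le_wk (β := α / 2) (γ := α / 2 - 1) hs le_rfl (by linarith)
        gcongr
      _ = _ := by ring
  have t2 : |B * (-z / (2 * a * s))| ≤ R * ((8 * R) ^ (1 / 2 : ℝ) / (2 * lam)) *
      (wk (α / 2) 1 s * Real.exp w) := by
    have e1 := abs_rpow_le (z := z) hR hs (θ := 1 / 2) (by norm_num) (by norm_num)
    rw [mul_one_div_cancel two_ne_zero, Real.rpow_one, ← hw] at e1
    have e3 : s ^ (1 / 2 : ℝ) * s⁻¹ = s ^ (1 / 2 - 1 : ℝ) := by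
      rw [Real.rpow_sub_one hs.ne']; exact (div_eq_mul_inv _ _).symm
    have e4 := rpow_le_wk (β := α / 2) (γ := 1 / 2 - 1) hs (by linarith) (by linarith)
    rw [abs_mul, abs_div, abs_neg, abs_of_pos (show 0 < 2 * a * s by positivity)]
    calc |B| * (|z| / (2 * a * s))
        ≤ R * ((8 * R) ^ (1 / 2 : ℝ) * s ^ (1 / 2 : ℝ) * (1 + w) / (2 * lam * s)) := by gcongr
      _ = R * ((8 * R) ^ (1 / 2 : ℝ) / (2 * lam)) *
          ((s ^ (1 / 2 : ℝ) * s⁻¹) * (1 + w)) := by field_simp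
      _ ≤ _ := by rw [e3]; gcongr
  have t3 : |C| ≤ R * (wk (α / 2) 1 s * Real.exp w) := by
    have e4 := rpow_le_wk (β := α / 2) (γ := 0) hs (by linarith) (by linarith)
    rw [Real.rpow_zero] at e4
    calc |C| ≤ R * (1 * 1) := by linarith
      _ ≤ _ := by gcongr
  calc _ ≤ |d * ((z / (2 * a * s)) ^ 2 - 1 / (2 * a * s))| + |B * (-z / (2 * a * s))| + |C| :=
        abs_add_three _ _ _
    _ ≤ _ := by linarith

/-- The constant `K` depends only on `R`, `λ`, `α`. -/
lemma exists_kernel_bound {R lam α : ℝ} (hα : 0 < α) (hα1 : α ≤ 1) (hlam : 0 < lam)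
    (hlR : lam < R) :
    ∃ K : ℝ, 0 < K ∧ ∀ a b c : ℝ → ℝ → ℝ, GoodCoef R lam α a b c → ∀ x t ξ τ : ℝ,
      |Zf a x t ξ τ| ≤ K * (wk (α / 2) 1 (t - τ) * gk (2 * R) (x - ξ) (t - τ)) ∧
      |LZ1 a b c x t ξ τ| ≤ K * (wk (α / 2) 1 (t - τ) * gk (2 * R) (x - ξ) (t - τ)) := by
  have hR : 0 < R := by linarith
  set C : ℝ := 2 * (R * ((8 * R) ^ (α / 2) + 1) * (2 * R / lam ^ 2 + 1 / (2 * lam))) +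
        R * ((8 * R) ^ (1 / 2 : ℝ) / (2 * lam)) + R with hC
  have hC0 : 0 < C := by positivity
  set S : ℝ := Real.sqrt (2 * R / lam) with hS
  have hS0 : 0 < S := by positivity
  refine ⟨S + C * S, by positivity, fun a b c hg x t ξ τ => ?_⟩
  have hla := hg.lower ξ τ
  have haR := hg.upper ξ τ
  have hgk := gk_nonneg (2 * R) (x - ξ) (t - τ)
  rcases le_or_gt t τ with h | h
  · have hz : Zf a x t ξ τ = 0 := by
      have : 4 * Real.pi * a ξ τ * (t - τ) ≤ 0 :=
        mul_nonpos_of_nonneg_of_nonpos (mul_nonneg (by positivity) (by linarith)) (by linarith)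
      simp [Zf, Real.sqrt_eq_zero_of_nonpos this]
    rw [LZ1_eq, hz, gk_eq_zero (by positivity) _ (sub_nonpos.2 h)]
    simp
  have hs := sub_pos.2 h
  have hZ0 : 0 ≤ Zf a x t ξ τ := by unfold Zf; positivity
  have hZ : Zf a x t ξ τ ≤ S * Real.exp (-((x - ξ) ^ 2 / (8 * R * (t - τ)))) *
      gk (2 * R) (x - ξ) (t - τ) := Zf_le hlam hla haR hs
  have hW := rpow_le_wk (β := α / 2) (γ := 0) hs (by linarith) (by linarith)
  rw [Real.rpow_zero] at hW
  have hW0 := wk_nonneg (α / 2) 1 hs.le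
  have hww : 0 ≤ (x - ξ) ^ 2 / (8 * R * (t - τ)) := by positivity
  constructor
  · rw [abs_of_nonneg hZ0]
    calc Zf a x t ξ τ ≤ S * Real.exp (-((x - ξ) ^ 2 / (8 * R * (t - τ)))) *
          gk (2 * R) (x - ξ) (t - τ) := hZ
      _ ≤ S * 1 * (1 * gk (2 * R) (x - ξ) (t - τ)) := by
          rw [one_mul]; gcongr; exact Real.exp_le_one_iff.2 (by linarith)
      _ ≤ (S + C * S) * (wk (α / 2) 1 (t - τ) * gk (2 * R) (x - ξ) (t - τ)) := by
          rw [mul_one]; gcongr; linarith [mul_pos hC0 hS0]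
  · have hd := hg.hol ξ τ x t
    rw [abs_sub_comm ξ x, abs_sub_comm τ t, abs_of_pos hs] at hd
    have hbr := bracket_le hα hα1 hlam hla haR hs hd (hg.bdd_b x t) (hg.bdd_c x t)
    rw [← hC] at hbr
    rw [LZ1_eq, abs_mul, abs_of_nonneg hZ0]
    refine (mul_le_mul hbr hZ hZ0 (by positivity)).trans ?_
    have he : Real.exp ((x - ξ) ^ 2 / (8 * R * (t - τ))) *
        Real.exp (-((x - ξ) ^ 2 / (8 * R * (t - τ)))) = 1 := by
      rw [← Real.exp_add, add_neg_cancel, Real.exp_zero]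
    calc _ = C * S * (wk (α / 2) 1 (t - τ) * gk (2 * R) (x - ξ) (t - τ)) *
          (Real.exp ((x - ξ) ^ 2 / (8 * R * (t - τ))) *
            Real.exp (-((x - ξ) ^ 2 / (8 * R * (t - τ))))) := by ring
      _ = C * S * (wk (α / 2) 1 (t - τ) * gk (2 * R) (x - ξ) (t - τ)) := by rw [he, mul_one]
      _ ≤ _ := by gcongr; linarith

/-- What the convergence argument needs of a coefficient triple: the parametrix `Z` and the kernel
`(LZ)₁` are measurable and dominated by `K (t-τ)^{β-1} e^{t-τ}` times a Gaussian. The bounds are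
imposed for all times; for `t ≤ τ` their right-hand side is `0`, so they say that both kernels
vanish there. -/
structure KernelOK (β κ K : ℝ) (a b c : ℝ → ℝ → ℝ) : Prop where
  bound_Z : ∀ x t ξ τ, |Zf a x t ξ τ| ≤ K * (wk β 1 (t - τ) * gk κ (x - ξ) (t - τ))
  bound_L : ∀ x t ξ τ, |LZ1 a b c x t ξ τ| ≤ K * (wk β 1 (t - τ) * gk κ (x - ξ) (t - τ))
  meas_Z : Measurable fun z : (ℝ × ℝ) × (ℝ × ℝ) => Zf a z.1.1 z.1.2 z.2.1 z.2.2
  meas_L : Measurable fun z : (ℝ × ℝ) × (ℝ × ℝ) => LZ1 a b c z.1.1 z.1.2 z.2.1 z.2.2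

/-! ### The iterated kernels and the series `φ` -/

section Series

variable {β κ K ν : ℝ} {a b c : ℝ → ℝ → ℝ}

lemma KernelOK.LZ1_eq_zero (h : KernelOK β κ K a b c) (hκ : 0 < κ) {t τ : ℝ} (ht : t ≤ τ)
    (x ξ : ℝ) : LZ1 a b c x t ξ τ = 0 := by
  have := h.bound_L x t ξ τ
  rw [gk_eq_zero hκ _ (sub_nonpos.2 ht), mul_zero, mul_zero] at this
  exact abs_nonpos_iff.1 this

lemma KernelOK.LZm_eq_zero (h : KernelOK β κ K a b c) (hκ : 0 < κ) {t τ : ℝ} (ht : t ≤ τ)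
    (m : ℕ) (x ξ : ℝ) : LZm a b c m x t ξ τ = 0 := by
  cases m with
  | zero => exact h.LZ1_eq_zero hκ ht x ξ
  | succ m =>
    have : Set.EqOn (fun σ => ∫ y : ℝ, LZ1 a b c x t y σ * LZm a b c m y σ ξ τ) (fun _ => 0)
        (Set.uIcc τ t) := by
      intro σ hσ
      rw [Set.uIcc_of_ge ht] at hσ
      simp [h.LZ1_eq_zero hκ hσ.1]
    simp only [LZm]
    rw [intervalIntegral.integral_congr this]
    simp

/-- Since `(LZ)₁(x,t,y,σ)` vanishes for `σ ≥ t` and `(LZ)ₘ(y,σ,ξ,τ)` for `σ ≤ τ`, the iterated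
kernel is an integral over all of `ℝ × ℝ`, whatever the order of `τ` and `t`; this form gives joint
measurability in `(x,t)`. -/
lemma KernelOK.LZm_succ (h : KernelOK β κ K a b c) (hκ : 0 < κ) (m : ℕ) (x t ξ τ : ℝ) :
    LZm a b c (m + 1) x t ξ τ = ∫ σ, ∫ y : ℝ, LZ1 a b c x t y σ * LZm a b c m y σ ξ τ := by
  rcases le_or_gt t τ with ht | ht
  · rw [h.LZm_eq_zero hκ ht]
    have : (fun σ => ∫ y : ℝ, LZ1 a b c x t y σ * LZm a b c m y σ ξ τ) = fun _ => 0 := by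
      funext σ
      rcases le_total t σ with h1 | h1
      · simp [h.LZ1_eq_zero hκ h1]
      · simp [h.LZm_eq_zero hκ (h1.trans ht)]
    rw [this, integral_zero]
  · refine intervalIntegral.integral_eq_integral_of_support_subset ?_
    intro σ hσ
    by_contra hn
    refine hσ ?_
    rw [Set.mem_Ioc, not_and_or, not_lt, not_le] at hn
    rcases hn with h1 | h1
    · simp [h.LZm_eq_zero hκ h1]
    · simp [h.LZ1_eq_zero hκ h1.le]

lemma KernelOK.measurable_LZm (h : KernelOK β κ K a b c) (hκ : 0 < κ) (m : ℕ) (ξ τ : ℝ) :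
    Measurable fun z : ℝ × ℝ => LZm a b c m z.1 z.2 ξ τ := by
  induction m with
  | zero => exact h.meas_L.comp (measurable_prodMk_right (y := ((ξ, τ) : ℝ × ℝ)))
  | succ m ih =>
    simp only [h.LZm_succ hκ]
    have h1 : Measurable fun p : ((ℝ × ℝ) × ℝ) × ℝ =>
        LZ1 a b c p.1.1.1 p.1.1.2 p.2 p.1.2 * LZm a b c m p.2 p.1.2 ξ τ := by
      refine Measurable.mul ?_ ?_
      · exact h.meas_L.comp (g := fun z : (ℝ × ℝ) × (ℝ × ℝ) =>
          LZ1 a b c z.1.1 z.1.2 z.2.1 z.2.2)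
          (f := fun p : ((ℝ × ℝ) × ℝ) × ℝ => (p.1.1, (p.2, p.1.2))) (by fun_prop)
      · exact ih.comp (g := fun z : ℝ × ℝ => LZm a b c m z.1 z.2 ξ τ)
          (f := fun p : ((ℝ × ℝ) × ℝ) × ℝ => (p.2, p.1.2)) (by fun_prop)
    have h2 := h1.stronglyMeasurable.integral_prod_right' (ν := volume)
    exact (h2.integral_prod_right' (ν := volume)).measurable

/-- Each iteration gains a factor `1/2`, provided the exponential rate `ν` is so large that the
constant of `abs_conv_le` is at most `1/2`. -/
lemma KernelOK.abs_LZm_le (h : KernelOK β κ K a b c) (hκ : 0 < κ) (hβ : 0 < β) (hβ1 : β ≤ 1)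
    (hK : 0 ≤ K) (hν : 0 < ν)
    (hνK : K * (2 ^ (1 - β) * (2 * ((1 / ν) ^ β * Real.Gamma β))) ≤ 1 / 2)
    (ξ τ : ℝ) (m : ℕ) (x t : ℝ) :
    |LZm a b c m x t ξ τ| ≤
      K * (1 / 2) ^ m * (wk β (ν + 1) (t - τ) * gk κ (x - ξ) (t - τ)) := by
  induction m generalizing x t with
  | zero =>
    rcases le_or_gt t τ with ht | ht
    · simp [h.LZm_eq_zero hκ ht, gk_eq_zero hκ _ (sub_nonpos.2 ht)]
    refine (h.bound_L x t ξ τ).trans ?_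
    have hs := sub_pos.2 ht
    have hg := gk_nonneg κ (x - ξ) (t - τ)
    have hw : wk β 1 (t - τ) ≤ wk β (ν + 1) (t - τ) := by
      unfold wk
      refine mul_le_mul_of_nonneg_left (Real.exp_le_exp.2 ?_) (Real.rpow_nonneg hs.le _)
      nlinarith
    rw [pow_zero, mul_one]
    gcongr
  | succ m ih =>
    rcases le_or_gt t τ with ht | ht
    · simp [h.LZm_eq_zero hκ ht, gk_eq_zero hκ _ (sub_nonpos.2 ht)]
    have hg := gk_nonneg κ (x - ξ) (t - τ)
    have hw := wk_nonneg β (ν + 1) (sub_pos.2 ht).le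
    have h1 := abs_conv_le (A := fun y σ => LZ1 a b c x t y σ)
      (F := fun y σ => LZm a b c m y σ ξ τ) hκ hβ hβ1 hν hK
      (show 0 ≤ K * (1 / 2) ^ m by positivity) ht
      (fun y σ => h.bound_L x t y σ) (fun y σ => ih y σ)
    refine h1.trans ?_
    calc _ ≤ 1 / 2 * (K * (1 / 2) ^ m) * (wk β (ν + 1) (t - τ) * gk κ (x - ξ) (t - τ)) := by
          gcongr
      _ = _ := by ring

lemma KernelOK.hasSum_phiP (h : KernelOK β κ K a b c) (hκ : 0 < κ) (hβ : 0 < β) (hβ1 : β ≤ 1)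
    (hK : 0 ≤ K) (hν : 0 < ν)
    (hνK : K * (2 ^ (1 - β) * (2 * ((1 / ν) ^ β * Real.Gamma β))) ≤ 1 / 2)
    (x t ξ τ : ℝ) :
    HasSum (fun m : ℕ => (-1 : ℝ) ^ (m + 1) * LZm a b c m x t ξ τ) (phiP a b c x t ξ τ) := by
  refine Summable.hasSum (Summable.of_norm_bounded
    ((summable_geometric_two.mul_left K).mul_right
      (wk β (ν + 1) (t - τ) * gk κ (x - ξ) (t - τ))) fun m => ?_)
  simpa [abs_mul, abs_pow] using h.abs_LZm_le hκ hβ hβ1 hK hν hνK ξ τ m x t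

lemma KernelOK.abs_phiP_le (h : KernelOK β κ K a b c) (hκ : 0 < κ) (hβ : 0 < β) (hβ1 : β ≤ 1)
    (hK : 0 ≤ K) (hν : 0 < ν)
    (hνK : K * (2 ^ (1 - β) * (2 * ((1 / ν) ^ β * Real.Gamma β))) ≤ 1 / 2)
    (x t ξ τ : ℝ) :
    |phiP a b c x t ξ τ| ≤ K * 2 * (wk β (ν + 1) (t - τ) * gk κ (x - ξ) (t - τ)) := by
  rw [← Real.norm_eq_abs]
  refine tsum_of_norm_bounded ((hasSum_geometric_two.mul_left K).mul_right
      (wk β (ν + 1) (t - τ) * gk κ (x - ξ) (t - τ))) fun m => ?_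
  simpa [abs_mul, abs_pow] using h.abs_LZm_le hκ hβ hβ1 hK hν hνK ξ τ m x t

lemma KernelOK.measurable_phiP (h : KernelOK β κ K a b c) (hκ : 0 < κ) (hβ : 0 < β)
    (hβ1 : β ≤ 1) (hK : 0 ≤ K) (hν : 0 < ν)
    (hνK : K * (2 ^ (1 - β) * (2 * ((1 / ν) ^ β * Real.Gamma β))) ≤ 1 / 2) (ξ τ : ℝ) :
    Measurable fun z : ℝ × ℝ => phiP a b c z.1 z.2 ξ τ := by
  refine measurable_of_tendsto_metrizable (f := fun (N : ℕ) (z : ℝ × ℝ) =>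
    ∑ m ∈ Finset.range N, (-1 : ℝ) ^ (m + 1) * LZm a b c m z.1 z.2 ξ τ) ?_ ?_
  · exact fun N => Finset.measurable_fun_sum _ fun m _ =>
      (h.measurable_LZm hκ m ξ τ).const_mul _
  · rw [tendsto_pi_nhds]
    exact fun z => (h.hasSum_phiP hκ hβ hβ1 hK hν hνK z.1 z.2 ξ τ).tendsto_sum_nat

end Series

/-! ### Passage to the limit -/

/-- Convergence passes from `Z` and `(LZ)₁` to every `(LZ)ₘ`, then to `φ` and to `Γ`, by dominated
convergence, under kernel bounds uniform in `n`. -/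
lemma GammaP_tendsto_of_kernel {β κ K : ℝ} {aseq bseq cseq : ℕ → ℝ → ℝ → ℝ}
    {a b c : ℝ → ℝ → ℝ} (hκ : 0 < κ) (hβ : 0 < β) (hβ1 : β ≤ 1) (hK : 0 ≤ K)
    (hs : ∀ n, KernelOK β κ K (aseq n) (bseq n) (cseq n))
    (h0 : KernelOK β κ K a b c)
    (hZ : ∀ x t ξ τ, Tendsto (fun n => Zf (aseq n) x t ξ τ) atTop (nhds (Zf a x t ξ τ)))
    (hL : ∀ x t ξ τ, Tendsto (fun n => LZ1 (aseq n) (bseq n) (cseq n) x t ξ τ) atTop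
      (nhds (LZ1 a b c x t ξ τ))) (x ξ : ℝ) {t τ : ℝ} (hτ : τ < t) :
    Tendsto (fun n => GammaP (aseq n) (bseq n) (cseq n) x t ξ τ) atTop
      (nhds (GammaP a b c x t ξ τ)) := by
  obtain ⟨ν, hν, hνK⟩ := exists_rate hβ K
  have hLm : ∀ m y σ, Tendsto (fun n => LZm (aseq n) (bseq n) (cseq n) m y σ ξ τ) atTop
      (nhds (LZm a b c m y σ ξ τ)) := by
    intro m
    induction m with
    | zero => exact fun y σ => hL y σ ξ τ
    | succ m ih =>
      intro y σ
      rcases le_or_gt σ τ with h1 | h1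
      · simp only [(hs _).LZm_eq_zero hκ h1, h0.LZm_eq_zero hκ h1]
        exact tendsto_const_nhds
      exact conv_tendsto (A := fun n z r => LZ1 (aseq n) (bseq n) (cseq n) y σ z r)
        (F := fun n z r => LZm (aseq n) (bseq n) (cseq n) m z r ξ τ) hκ hβ hβ1 hν hK
        (show 0 ≤ K * (1 / 2) ^ m by positivity) h1
        (fun n z r => (hs n).bound_L y σ z r)
        (fun n z r => (hs n).abs_LZm_le hκ hβ hβ1 hK hν hνK ξ τ m z r)
        (fun n => (hs n).meas_L.comp (measurable_prodMk_left (x := ((y, σ) : ℝ × ℝ))))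
        (fun n => (hs n).measurable_LZm hκ m ξ τ)
        (fun z r => hL y σ z r) (fun z r => ih z r)
  have hphi : ∀ y σ, Tendsto (fun n => phiP (aseq n) (bseq n) (cseq n) y σ ξ τ) atTop
      (nhds (phiP a b c y σ ξ τ)) := by
    intro y σ
    refine tendsto_tsum_of_dominated_convergence
      (bound := fun m : ℕ => K * (1 / 2) ^ m * (wk β (ν + 1) (σ - τ) * gk κ (y - ξ) (σ - τ)))
      ((summable_geometric_two.mul_left K).mul_right _)
      (fun m => (hLm m y σ).const_mul _) (Eventually.of_forall fun n m => ?_)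
    simpa [abs_mul, abs_pow] using (hs n).abs_LZm_le hκ hβ hβ1 hK hν hνK ξ τ m y σ
  refine (hZ x t ξ τ).add ?_
  exact conv_tendsto (A := fun n z r => Zf (aseq n) x t z r)
    (F := fun n z r => phiP (aseq n) (bseq n) (cseq n) z r ξ τ) hκ hβ hβ1 hν hK
    (show 0 ≤ K * 2 by positivity) hτ
    (fun n z r => (hs n).bound_Z x t z r)
    (fun n z r => (hs n).abs_phiP_le hκ hβ hβ1 hK hν hνK z r ξ τ)
    (fun n => (hs n).meas_Z.comp (measurable_prodMk_left (x := ((x, t) : ℝ × ℝ))))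
    (fun n => (hs n).measurable_phiP hκ hβ hβ1 hK hν hνK ξ τ)
    (fun z r => hZ x t z r) hphi

/-! ### Extension of the coefficients in time -/

/-- The extension of `u` from `ℝ × [0,T]` to `ℝ × ℝ` that is constant in time outside `[0,T]`;
it keeps the sup bound and the Hölder constant. -/
noncomputable def clampT (T : ℝ) (u : ℝ → ℝ → ℝ) : ℝ → ℝ → ℝ := fun x t => u x (max 0 (min T t))

lemma clampT_of_mem {T t : ℝ} (h0 : 0 ≤ t) (hT : t ≤ T) (u : ℝ → ℝ → ℝ) (x : ℝ) :
    clampT T u x t = u x t := by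
  rw [clampT, min_eq_right hT, max_eq_right h0]

lemma clamp_nonneg (T t : ℝ) : 0 ≤ max 0 (min T t) := le_max_left _ _

lemma clamp_le {T : ℝ} (hT : 0 ≤ T) (t : ℝ) : max 0 (min T t) ≤ T := max_le hT (min_le_left _ _)

lemma clampT_bdd {T α C₁ C₂ : ℝ} {u : ℝ → ℝ → ℝ} (hT : 0 ≤ T) (h : inC T α C₁ C₂ u) (x t : ℝ) :
    |clampT T u x t| ≤ C₁ := h.1 x _ (clamp_nonneg T t) (clamp_le hT t)

lemma clampT_hol {T α C₁ C₂ : ℝ} {u : ℝ → ℝ → ℝ} (hT : 0 ≤ T) (hα : 0 < α) (hC : 0 ≤ C₂)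
    (h : inC T α C₁ C₂ u) (x t x' t' : ℝ) :
    |clampT T u x t - clampT T u x' t'| ≤ C₂ * (|x - x'| ^ α + |t - t'| ^ (α / 2)) := by
  refine (h.2 x _ x' _ (clamp_nonneg T t) (clamp_le hT t) (clamp_nonneg T t')
    (clamp_le hT t')).trans ?_
  have : |max 0 (min T t) - max 0 (min T t')| ≤ |t - t'| := by
    have h1 := abs_max_sub_max_le_max 0 (min T t) 0 (min T t')
    have h2 := abs_min_sub_min_le_max T t T t'
    rw [sub_self, abs_zero, max_eq_right (abs_nonneg (min T t - min T t'))] at h1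
    rw [sub_self, abs_zero, max_eq_right (abs_nonneg (t - t'))] at h2
    exact h1.trans h2
  gcongr

lemma clampT_measurable {T α C₁ C₂ : ℝ} {u : ℝ → ℝ → ℝ} (hT : 0 ≤ T) (hα : 0 < α) (hC : 0 ≤ C₂)
    (h : inC T α C₁ C₂ u) : Measurable fun z : ℝ × ℝ => clampT T u z.1 z.2 := by
  refine Continuous.measurable (continuous_iff_continuousAt.2 fun z₀ => ?_)
  rw [ContinuousAt, tendsto_iff_dist_tendsto_zero]
  refine squeeze_zero (fun _ => dist_nonneg)
    (fun z => clampT_hol hT hα hC h z.1 z.2 z₀.1 z₀.2) ?_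
  have h2 : 0 < α / 2 := by positivity
  have hc : Continuous fun z : ℝ × ℝ =>
      C₂ * (|z.1 - z₀.1| ^ α + |z.2 - z₀.2| ^ (α / 2)) := by
    refine continuous_const.mul (Continuous.add ?_ ?_)
    · exact Continuous.rpow_const (by fun_prop) fun _ => Or.inr hα.le
    · exact Continuous.rpow_const (by fun_prop) fun _ => Or.inr h2.le
  have := hc.tendsto z₀
  simpa [Real.zero_rpow hα.ne', Real.zero_rpow h2.ne'] using this

lemma goodCoef_clampT {T R lam α : ℝ} {a b c : ℝ → ℝ → ℝ} (hT : 0 ≤ T) (hα : 0 < α)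
    (h : memB T R lam α a b c) :
    GoodCoef R lam α (clampT T a) (clampT T b) (clampT T c) := by
  obtain ⟨hl, ⟨A1, A2, hA1, hA2, hA, ha⟩, ⟨B1, B2, hB1, hB2, hB, hb⟩,
    ⟨D1, D2, hD1, hD2, hD, hc⟩⟩ := h
  refine ⟨fun x t => hl x _ (clamp_nonneg T t) (clamp_le hT t), fun x t => ?_, fun x t => ?_,
    fun x t => ?_, fun x t x' t' => ?_, clampT_measurable hT hα hA2 ha,
    clampT_measurable hT hα hB2 hb, clampT_measurable hT hα hD2 hc⟩
  · have := clampT_bdd hT ha x t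
    linarith [le_abs_self (clampT T a x t)]
  · linarith [clampT_bdd hT hb x t]
  · linarith [clampT_bdd hT hc x t]
  · refine (clampT_hol hT hα hA2 ha x t x' t').trans ?_
    gcongr
    linarith

lemma Zf_clampT {T τ : ℝ} (h0 : 0 ≤ τ) (hT : τ ≤ T) (a : ℝ → ℝ → ℝ) (x t ξ : ℝ) :
    Zf (clampT T a) x t ξ τ = Zf a x t ξ τ := by
  simp only [Zf, clampT_of_mem h0 hT]

lemma LZ1_clampT {T t τ : ℝ} (h0 : 0 ≤ τ) (hτT : τ ≤ T) (ht0 : 0 ≤ t) (htT : t ≤ T)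
    (a b c : ℝ → ℝ → ℝ) (x ξ : ℝ) :
    LZ1 (clampT T a) (clampT T b) (clampT T c) x t ξ τ = LZ1 a b c x t ξ τ := by
  simp only [LZ1, Zf_clampT h0 hτT, clampT_of_mem h0 hτT, clampT_of_mem ht0 htT]

lemma LZm_clampT {T τ : ℝ} (h0 : 0 ≤ τ) (hτT : τ ≤ T) (a b c : ℝ → ℝ → ℝ) (ξ : ℝ) (m : ℕ)
    (x t : ℝ) (ht0 : 0 ≤ t) (htT : t ≤ T) :
    LZm (clampT T a) (clampT T b) (clampT T c) m x t ξ τ = LZm a b c m x t ξ τ := by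
  induction m generalizing x t with
  | zero => exact LZ1_clampT h0 hτT ht0 htT a b c x ξ
  | succ m ih =>
    simp only [LZm]
    refine intervalIntegral.integral_congr fun σ hσ => ?_
    have h1 : 0 ≤ σ := (le_min h0 ht0).trans hσ.1
    have h2 : σ ≤ T := hσ.2.trans (max_le hτT htT)
    simp only [LZ1_clampT h1 h2 ht0 htT, ih _ σ h1 h2]

lemma GammaP_clampT {T t τ : ℝ} (h0 : 0 ≤ τ) (hτT : τ ≤ T) (ht0 : 0 ≤ t) (htT : t ≤ T)
    (a b c : ℝ → ℝ → ℝ) (x ξ : ℝ) :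
    GammaP (clampT T a) (clampT T b) (clampT T c) x t ξ τ = GammaP a b c x t ξ τ := by
  simp only [GammaP, Zf_clampT h0 hτT]
  congr 1
  refine intervalIntegral.integral_congr fun σ hσ => ?_
  have h1 : 0 ≤ σ := (le_min h0 ht0).trans hσ.1
  have h2 : σ ≤ T := hσ.2.trans (max_le hτT htT)
  simp only [phiP, Zf_clampT h1 h2, LZm_clampT h0 hτT a b c ξ _ _ σ h1 h2]

/-! ### Convergence of `Z` and `(LZ)₁` -/

lemma Zf_tendsto {aseq : ℕ → ℝ → ℝ → ℝ} {a : ℝ → ℝ → ℝ} {ξ τ : ℝ} (ha : 0 < a ξ τ)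
    (h : Tendsto (fun n => aseq n ξ τ) atTop (nhds (a ξ τ)))
    (hpos : ∀ n, 0 < aseq n ξ τ) (x t : ℝ) :
    Tendsto (fun n => Zf (aseq n) x t ξ τ) atTop (nhds (Zf a x t ξ τ)) := by
  rcases le_or_gt t τ with ht | ht
  · have hz : ∀ d : ℝ, 0 < d → Real.sqrt (4 * Real.pi * d * (t - τ)) = 0 := fun d hd =>
      Real.sqrt_eq_zero_of_nonpos
        (mul_nonpos_of_nonneg_of_nonpos (by positivity) (by linarith))
    simp only [Zf, hz _ ha, hz _ (hpos _), inv_zero, zero_mul]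
    exact tendsto_const_nhds
  · have hs := sub_pos.2 ht
    unfold Zf
    refine Tendsto.mul (Tendsto.inv₀ ?_ (by positivity)) ?_
    · exact ((h.const_mul _).mul_const _).sqrt
    · exact (Real.continuous_exp.tendsto _).comp
        (tendsto_const_nhds.div ((h.const_mul _).mul_const _) (by positivity))

lemma LZ1_tendsto {aseq bseq cseq : ℕ → ℝ → ℝ → ℝ} {a b c : ℝ → ℝ → ℝ}
    (ha : ∀ x t, 0 < a x t) (hpos : ∀ n x t, 0 < aseq n x t)
    (hal : ∀ x t, Tendsto (fun n => aseq n x t) atTop (nhds (a x t)))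
    (hbl : ∀ x t, Tendsto (fun n => bseq n x t) atTop (nhds (b x t)))
    (hcl : ∀ x t, Tendsto (fun n => cseq n x t) atTop (nhds (c x t))) (x t ξ τ : ℝ) :
    Tendsto (fun n => LZ1 (aseq n) (bseq n) (cseq n) x t ξ τ) atTop
      (nhds (LZ1 a b c x t ξ τ)) := by
  have hZ := Zf_tendsto (ha ξ τ) (hal ξ τ) (fun n => hpos n ξ τ) x t
  simp only [LZ1_eq]
  rcases eq_or_ne t τ with rfl | ht
  · simp only [sub_self, mul_zero, div_zero]
    exact (((((hal ξ t).sub (hal x t)).mul_const _).add tendsto_const_nhds).add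
      (hcl x t)).mul hZ
  · have hD : 2 * a ξ τ * (t - τ) ≠ 0 :=
      mul_ne_zero (mul_ne_zero two_ne_zero (ha ξ τ).ne') (sub_ne_zero.2 ht)
    have hDl : Tendsto (fun n => 2 * aseq n ξ τ * (t - τ)) atTop (nhds (2 * a ξ τ * (t - τ))) :=
      ((hal ξ τ).const_mul _).mul_const _
    exact (((((hal ξ τ).sub (hal x t)).mul (((tendsto_const_nhds.div hDl hD).pow 2).sub
      (tendsto_const_nhds.div hDl hD))).add
      ((hbl x t).mul (tendsto_const_nhds.div hDl hD))).add (hcl x t)).mul hZ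

/-- Lemma 5: pointwise convergence of the fundamental solutions under
pointwise convergence of the coefficients. -/
theorem Gamma_pointwise_convergence
    (T R lam α : ℝ) (hT : 0 < T) (hR : 0 < R) (hlam : 0 < lam)
    (hα : 0 < α) (hα1 : α ≤ 1) (hlR : lam < R)
    (aseq bseq cseq : ℕ → ℝ → ℝ → ℝ) (a b c : ℝ → ℝ → ℝ)
    (hseq : ∀ n, memB T R lam α (aseq n) (bseq n) (cseq n))
    (hv : memB T R lam α a b c)
    (hconv : ∀ x t, 0 ≤ t → t ≤ T →
      Tendsto (fun n => aseq n x t) atTop (nhds (a x t)) ∧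
      Tendsto (fun n => bseq n x t) atTop (nhds (b x t)) ∧
      Tendsto (fun n => cseq n x t) atTop (nhds (c x t))) :
    ∀ x t ξ τ : ℝ, 0 ≤ τ → τ < t → 0 ≤ t → t ≤ T → τ ≤ T →
      Tendsto (fun n => GammaP (aseq n) (bseq n) (cseq n) x t ξ τ) atTop
        (nhds (GammaP a b c x t ξ τ)) := by
  intro x t ξ τ h0 hτ ht0 htT hτT
  obtain ⟨K, hK, hker⟩ := exists_kernel_bound hα hα1 hlam hlR
  have hOK : ∀ a b c : ℝ → ℝ → ℝ, memB T R lam α a b c →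
      KernelOK (α / 2) (2 * R) K (clampT T a) (clampT T b) (clampT T c) := by
    intro a b c h
    have hg := goodCoef_clampT hT.le hα h
    exact ⟨fun x t ξ τ => (hker _ _ _ hg x t ξ τ).1, fun x t ξ τ => (hker _ _ _ hg x t ξ τ).2,
      measurable_Zf hg.meas_a, measurable_LZ1 hg.meas_a hg.meas_b hg.meas_c⟩
  have hpos : ∀ a b c : ℝ → ℝ → ℝ, memB T R lam α a b c → ∀ x t, 0 < clampT T a x t :=
    fun a b c h x t => hlam.trans_le ((goodCoef_clampT hT.le hα h).lower x t)
  have hconv' := fun x t => hconv x _ (clamp_nonneg T t) (clamp_le hT.le t)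
  have key := GammaP_tendsto_of_kernel (by positivity) (by positivity) (by linarith) hK.le
    (fun n => hOK _ _ _ (hseq n)) (hOK a b c hv)
    (fun x t ξ τ => Zf_tendsto (hpos _ _ _ hv ξ τ) (hconv' ξ τ).1
      (fun n => hpos _ _ _ (hseq n) ξ τ) x t)
    (LZ1_tendsto (hpos _ _ _ hv) (fun n => hpos _ _ _ (hseq n)) (fun x t => (hconv' x t).1)
      (fun x t => (hconv' x t).2.1) (fun x t => (hconv' x t).2.2)) x ξ hτ
  simpa only [GammaP_clampT h0 hτT ht0 htT] using key
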